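/- Let G be a single-decision causal influence diagram with decision D and let X be a variable of G other than D. Then G is compatible with a response incentive on X if and only if there exist a parent W of D and a utility node U such that: (1) G contains a directed path from X to W, (2) G contains a directed path from D to U, and (3) W is d-connected to U given the remaining family of D, i.e. W is not d-separated from U by ({D} ∪ Pa_D) \ {W}. -/

import Mathlib

attribute [local instance] Classical.propDecidable

noncomputable section

/-! ### d-separation in a directed graph -/

/-- `b` is a collider on a path segment `a - b - c`. -/
def IsCollider {V : Type} (E : V → V → Prop) (a b c : V) : Prop := E a b ∧ E c b

/-- The triple `a - b - c` on an undirected path blocks the path w.r.t. `Z`: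
either the middle node is a non-collider (chain or fork) belonging to `Z`, or it is a
collider such that neither it nor any of its descendants belongs to `Z`. -/
def BlockedTriple {V : Type} (E : V → V → Prop) (Z : Set V) (a b c : V) : Prop :=
  (¬ IsCollider E a b c ∧ b ∈ Z) ∨
    (IsCollider E a b c ∧ ∀ w, Relation.ReflTransGen E b w → w ∉ Z)

/-- An undirected path: a nonempty list of distinct vertices in which consecutive
vertices are joined by an edge in one direction or the other. -/
def IsUPath {V : Type} (E : V → V → Prop) (p : List V) : Prop :=
  p ≠ [] ∧ p.Nodup ∧ p.Chain' (fun a b => E a b ∨ E b a)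

/-- A path is d-separated (blocked) by `Z` if some consecutive triple blocks it. -/
def BlockedPath {V : Type} (E : V → V → Prop) (Z : Set V) (p : List V) : Prop :=
  ∃ l₁ a b c l₂, p = l₁ ++ a :: b :: c :: l₂ ∧ BlockedTriple E Z a b c

/-- `Z` d-separates the node sets `S` and `T`: every undirected path from a node of `S`
to a node of `T` is blocked by `Z`. -/
def DSep {V : Type} (E : V → V → Prop) (S T Z : Set V) : Prop :=
  ∀ p : List V, IsUPath E p → (∃ s ∈ S, p.head? = some s) →
    (∃ t ∈ T, p.getLast? = some t) → BlockedPath E Z p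

/-! ### Causal influence diagrams and structural causal influence models -/

/-- A single-decision causal influence diagram: a finite DAG whose vertices are
partitioned into structure nodes, one decision node and utility nodes
(the utility nodes having no children). -/
structure CID (V : Type) where
  edge : V → V → Prop
  acyclic : ∀ v, ¬ Relation.TransGen edge v v
  decision : V
  utility : Finset V
  decision_not_utility : decision ∉ utility
  utility_no_children : ∀ u ∈ utility, ∀ v, ¬ edge u v

/-- A (single-decision) structural causal influence model over a CID: finite nonempty
domains for every variable, one finite-domain exogenous variable per variable, structural
functions for every non-decision variable, real-valued (injectively embedded, i.e. the
domain is a subset of ℝ) utility variables, and mutually independent exogenous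
distributions. -/
structure SCIM (V : Type) extends CID V where
  dom : V → Type
  dom_fintype : ∀ v, Fintype (dom v)
  dom_nonempty : ∀ v, Nonempty (dom v)
  edom : V → Type
  edom_fintype : ∀ v, Fintype (edom v)
  edom_nonempty : ∀ v, Nonempty (edom v)
  utilVal : ∀ v, dom v → ℝ
  utilVal_inj : ∀ v ∈ utility, Function.Injective (utilVal v)
  f : ∀ v, v ≠ decision → (∀ w, edge w v → dom w) → edom v → dom v
  μ : ∀ v, edom v → ℝ
  μ_nonneg : ∀ v e, 0 ≤ μ v e
  μ_sum : ∀ v, ∑ e ∈ @Finset.univ (edom v) (edom_fintype v), μ v e = 1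

variable {V : Type} [Fintype V] [DecidableEq V]

instance (M : SCIM V) (v : V) : Fintype (M.dom v) := M.dom_fintype v
instance (M : SCIM V) (v : V) : Nonempty (M.dom v) := M.dom_nonempty v
instance (M : SCIM V) (v : V) : Fintype (M.edom v) := M.edom_fintype v
instance (M : SCIM V) (v : V) : Nonempty (M.edom v) := M.edom_nonempty v

namespace SCIM

variable (M : SCIM V)

/-- A joint setting of the exogenous variables. -/
abbrev Env := ∀ v, M.edom v

/-- Joint probability of an exogenous setting (the exogenous variables are independent). -/
def prob (ε : M.Env) : ℝ := ∏ v, M.μ v (ε v)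

/-- The type of structural mechanisms for the vertex `v`. -/
def Mechanism (v : V) : Type := (∀ w, M.edge w v → M.dom w) → M.edom v → M.dom v

/-- A policy: a structural function for the decision node. -/
abbrev Policy := M.Mechanism M.decision

theorem edge_wf : WellFounded M.edge := by
  haveI : IsTrans V (Relation.TransGen M.edge) := ⟨fun _ _ _ h h' => h.trans h'⟩
  haveI : IsIrrefl V (Relation.TransGen M.edge) := ⟨M.acyclic⟩
  exact Subrelation.wf (fun h => Relation.TransGen.single h)
    (Finite.wellFounded_of_trans_of_irrefl _)

/-- The unique solution of the structural equations `mech` given exogenous setting `ε`. -/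
def solve (mech : ∀ v, M.Mechanism v) (ε : M.Env) : ∀ v, M.dom v :=
  WellFounded.fix (C := fun v => M.dom v) M.edge_wf
    (fun v IH => mech v (fun w hw => IH w hw) (ε v))

/-- The mechanisms of the SCM `M_π` obtained by fixing the policy `π`. -/
def polMech (π : M.Policy) : ∀ v, M.Mechanism v :=
  fun v => if h : v = M.decision then cast (congrArg M.Mechanism h).symm π else M.f v h

/-- Apply an intervention (a partial assignment `ι` of values) to mechanisms:
intervened variables are set to constants. -/
def doMech (mech : ∀ v, M.Mechanism v) (ι : ∀ v, Option (M.dom v)) : ∀ v, M.Mechanism v :=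
  fun v => match ι v with
    | some x => fun _ _ => x
    | none => mech v

/-- The single intervention `do(X = x)` as a partial assignment. -/
def single (X : V) (x : M.dom X) : ∀ v, Option (M.dom v) :=
  fun v => if h : v = X then some (cast (congrArg M.dom h).symm x) else none

/-- The value `W(ε)` of each variable in `M_π`. -/
def val (π : M.Policy) (ε : M.Env) : ∀ v, M.dom v := M.solve (M.polMech π) ε

/-- The potential response: the value of each variable in the submodel of `M_π`
given by the intervention `ι`. -/
def valDo (π : M.Policy) (ι : ∀ v, Option (M.dom v)) (ε : M.Env) : ∀ v, M.dom v :=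
  M.solve (M.doMech (M.polMech π) ι) ε

/-- Total utility of an assignment of values to the variables. -/
def totUtil (a : ∀ v, M.dom v) : ℝ := ∑ v ∈ M.utility, M.utilVal v (a v)

/-- Expected total utility of the policy `π`. -/
def EU (π : M.Policy) : ℝ := ∑ ε : M.Env, M.prob ε * M.totUtil (M.val π ε)

/-- An optimal policy maximizes expected total utility. -/
def Optimal (π : M.Policy) : Prop := ∀ π' : M.Policy, M.EU π' ≤ M.EU π

/-- A decision context: a joint value of the parents of the decision. -/
abbrev Ctx := ∀ w, M.edge w M.decision → M.dom w

/-- The decision context realized by the exogenous setting `ε` in `M_π`. -/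
def ctx (π : M.Policy) (ε : M.Env) : M.Ctx := fun w _ => M.val π ε w

/-- Probability of a decision context in `M_π`. -/
def ctxProb (π : M.Policy) (pa : M.Ctx) : ℝ :=
  ∑ ε : M.Env, if M.ctx π ε = pa then M.prob ε else 0

/-- Conditional expectation of `g` given the decision context `pa` in `M_π`. -/
def condExp (π : M.Policy) (pa : M.Ctx) (g : M.Env → ℝ) : ℝ :=
  (∑ ε : M.Env, if M.ctx π ε = pa then M.prob ε * g ε else 0) / M.ctxProb π pa

/-- The nested potential response `𝒰_{X_d}(ε)`: total utility when `X` is set to the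
value it would take under `do(D = d)`, everything else following `M_π`. -/
def nestedU (π : M.Policy) (X : V) (d : M.dom M.decision) (ε : M.Env) : ℝ :=
  M.totUtil (M.valDo π (M.single X (M.valDo π (M.single M.decision d) ε X)) ε)

/-- Control incentive on `X`: under every optimal policy, in some positive-probability
decision context some alternative decision `d` changes expected utility through `X`. -/
def ControlIncentive (X : V) : Prop :=
  ∀ π : M.Policy, M.Optimal π →
    ∃ pa : M.Ctx, 0 < M.ctxProb π pa ∧ ∃ d : M.dom M.decision,
      M.condExp π pa (M.nestedU π X d) ≠
        M.condExp π pa (fun ε => M.totUtil (M.val π ε))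

/-- Response incentive on `X`: under every optimal policy some intervention on `X`
changes the decision for some exogenous setting. -/
def ResponseIncentive (X : V) : Prop :=
  ∀ π : M.Policy, M.Optimal π →
    ∃ (x : M.dom X) (ε : M.Env),
      M.valDo π (M.single X x) ε M.decision ≠ M.val π ε M.decision

/-- Conditional probability of `event` given `cond` in `M_π`. -/
def cprob (π : M.Policy) (event cond : M.Env → Prop) : ℝ :=
  (∑ ε : M.Env, if cond ε ∧ event ε then M.prob ε else 0) /
    (∑ ε : M.Env, if cond ε then M.prob ε else 0)

/-- Counterfactual fairness of a policy `π` with respect to a protected attribute `A`: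
conditional on any positive-probability decision context and value of `A`, intervening
on `A` does not change the distribution of the decision. -/
def CFair (π : M.Policy) (A : V) : Prop :=
  ∀ (d : M.dom M.decision) (pa : M.Ctx) (a a' : M.dom A),
    (0 < ∑ ε : M.Env, if M.ctx π ε = pa ∧ M.val π ε A = a then M.prob ε else 0) →
      M.cprob π (fun ε => M.valDo π (M.single A a') ε M.decision = d)
          (fun ε => M.ctx π ε = pa ∧ M.val π ε A = a) =
        M.cprob π (fun ε => M.val π ε M.decision = d)
          (fun ε => M.ctx π ε = pa ∧ M.val π ε A = a)

/-- Expected value of the sum of utility variables in `S`. -/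
def EUOn (S : Finset V) (π : M.Policy) : ℝ :=
  ∑ ε : M.Env, M.prob ε * ∑ v ∈ S, M.utilVal v (M.val π ε v)

/-- The policy obtained from `π` by replacing the observations of the decision-parents
that are descendants of `X` by the fixed values `p`. -/
def modPolicy (π : M.Policy) (X : V) (p : M.Ctx) : M.Policy :=
  fun pa e =>
    π (fun w hw => if Relation.ReflTransGen M.edge X w then p w hw else pa w hw) e

end SCIM

/-- The graphical criterion for control incentives: a directed path `D ⇝ X ⇝ U`
for some utility node `U`. -/
def CICriterion {V : Type} (G : CID V) (X : V) : Prop :=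
  Relation.ReflTransGen G.edge G.decision X ∧
    ∃ u ∈ G.utility, Relation.ReflTransGen G.edge X u

/-- The graphical criterion for response incentives: a directed path from `X` to some
parent `W` of the decision `D`, a directed path from `D` to some utility node `U`, and
`W` d-connected to `U` given `({D} ∪ Pa_D) \ {W}`. -/
def RICriterion {V : Type} (G : CID V) (X : V) : Prop :=
  ∃ W, G.edge W G.decision ∧ ∃ u ∈ G.utility,
    Relation.ReflTransGen G.edge X W ∧
    Relation.ReflTransGen G.edge G.decision u ∧
    ¬ DSep G.edge {W} {u} (({G.decision} ∪ {w | G.edge w G.decision}) \ {W})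

end

set_option linter.unusedSectionVars false

namespace SCIM

variable {V : Type} [Fintype V] [DecidableEq V] (M : SCIM V)

theorem solve_eq (mech : ∀ v, M.Mechanism v) (ε : M.Env) (v : V) :
    M.solve mech ε v = mech v (fun w _ => M.solve mech ε w) (ε v) := by
  unfold solve
  rw [WellFounded.fix_eq]

theorem solve_eq_iff (mech : ∀ v, M.Mechanism v) (ε : M.Env) (a : ∀ v, M.dom v) :
    M.solve mech ε = a ↔ ∀ v, mech v (fun w _ => a w) (ε v) = a v := by
  constructor
  · rintro rfl v
    exact (M.solve_eq mech ε v).symm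
  · intro h
    funext v
    induction v using M.edge_wf.induction with
    | _ v ih =>
      rw [solve_eq, ← h v]
      congr 1
      funext w hw
      exact ih w hw

/-- The solution at `v` depends only on the mechanisms of the ancestors of `v`. -/
theorem solve_congr {mech mech' : ∀ v, M.Mechanism v} (ε : M.Env) (v : V)
    (h : ∀ w, Relation.ReflTransGen M.edge w v → mech w = mech' w) :
    M.solve mech ε v = M.solve mech' ε v := by
  induction v using M.edge_wf.induction with
  | _ v ih =>
    rw [solve_eq, solve_eq, h v .refl]
    congr 1
    funext w hw
    exact ih w hw fun x hx => h x (hx.tail hw)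

theorem polMech_of_ne (π : M.Policy) {v : V} (h : v ≠ M.decision) :
    M.polMech π v = M.f v h := by
  unfold polMech
  exact dif_neg h

theorem polMech_decision (π : M.Policy) : M.polMech π M.decision = π := by
  simp [polMech]

theorem val_decision (π : M.Policy) (ε : M.Env) :
    M.val π ε M.decision = π (M.ctx π ε) (ε M.decision) := by
  unfold val
  rw [solve_eq, polMech_decision]
  rfl

theorem val_congr_policy (π π' : M.Policy) (ε : M.Env) {v : V}
    (h : ¬ Relation.ReflTransGen M.edge M.decision v) : M.val π ε v = M.val π' ε v := by
  refine M.solve_congr ε v fun w hw => ?_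
  have hne : w ≠ M.decision := by rintro rfl; exact h hw
  rw [polMech_of_ne _ _ hne, polMech_of_ne _ _ hne]

theorem doMech_single_of_ne (mech : ∀ v, M.Mechanism v) {X : V} (x : M.dom X) {v : V}
    (h : v ≠ X) : M.doMech mech (M.single X x) v = mech v := by
  simp [doMech, single, h]

theorem doMech_single_self (mech : ∀ v, M.Mechanism v) (X : V) (x : M.dom X) :
    M.doMech mech (M.single X x) X = fun _ _ => x := by
  simp [doMech, single]
  rfl

theorem valDo_of_not_descendant (π : M.Policy) {X : V} (x : M.dom X) (ε : M.Env) {v : V}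
    (h : ¬ Relation.ReflTransGen M.edge X v) :
    M.valDo π (M.single X x) ε v = M.val π ε v := by
  refine M.solve_congr ε v fun w hw => M.doMech_single_of_ne _ _ ?_
  rintro rfl
  exact h hw

theorem valDo_self (π : M.Policy) (X : V) (x : M.dom X) (ε : M.Env) :
    M.valDo π (M.single X x) ε X = x := by
  unfold valDo
  rw [solve_eq, doMech_single_self]

theorem valDo_decision (π : M.Policy) {X : V} (hX : X ≠ M.decision) (x : M.dom X)
    (ε : M.Env) :
    M.valDo π (M.single X x) ε M.decision =
      π (fun w _ => M.valDo π (M.single X x) ε w) (ε M.decision) := by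
  unfold valDo
  rw [solve_eq, doMech_single_of_ne _ _ _ hX.symm, polMech_decision]

theorem val_eq_of_ne (π : M.Policy) (ε : M.Env) {v : V} (hv : v ≠ M.decision) :
    M.val π ε v = M.f v hv (fun w _ => M.val π ε w) (ε v) := by
  unfold val
  rw [solve_eq, polMech_of_ne _ _ hv]

theorem valDo_eq_of_ne (π : M.Policy) {X : V} (x : M.dom X) (ε : M.Env) {v : V}
    (hv : v ≠ M.decision) (hX : v ≠ X) :
    M.valDo π (M.single X x) ε v =
      M.f v hv (fun w _ => M.valDo π (M.single X x) ε w) (ε v) := by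
  unfold valDo
  rw [solve_eq, doMech_single_of_ne _ _ _ hX, polMech_of_ne _ _ hv]

/-- The conditional probability that the variable `v` takes the value `a v` when its
parents take the values prescribed by `a`. -/
noncomputable def factor (mech : ∀ v, M.Mechanism v) (a : ∀ v, M.dom v) (v : V) : ℝ :=
  ∑ e, if mech v (fun w _ => a w) e = a v then M.μ v e else 0

theorem factor_nonneg (mech : ∀ v, M.Mechanism v) (a : ∀ v, M.dom v) (v : V) :
    0 ≤ M.factor mech a v :=
  Finset.sum_nonneg fun e _ => by split_ifs <;> simp [M.μ_nonneg]

/-- Markov factorization of the distribution of the solution. -/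
theorem sum_prob_mul_solve (mech : ∀ v, M.Mechanism v) (F : (∀ v, M.dom v) → ℝ) :
    ∑ ε : M.Env, M.prob ε * F (M.solve mech ε) =
      ∑ a : ∀ v, M.dom v, (∏ v, M.factor mech a v) * F a := by
  have h (a : ∀ v, M.dom v) : ∏ v, M.factor mech a v =
      ∑ ε : M.Env, if M.solve mech ε = a then M.prob ε else 0 := by
    unfold factor
    rw [Finset.prod_univ_sum, Fintype.piFinset_univ]
    refine Finset.sum_congr rfl fun ε _ => ?_
    rw [Finset.prod_ite_zero]
    simp [solve_eq_iff, prob]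
  simp_rw [h, Finset.sum_mul]
  rw [Finset.sum_comm]
  refine Finset.sum_congr rfl fun ε _ => ?_
  simp

end SCIM

section Walks

variable {V : Type} (E : V → V → Prop)

/-- A walk on which consecutive vertices are joined by an edge, every interior collider
satisfies `p` and every interior non-collider satisfies `q`. -/
def OpenWalk (p q : V → Prop) : List V → Prop
  | a :: b :: l => (E a b ∨ E b a) ∧ OpenWalk p q (b :: l) ∧
      ∀ c ∈ l.head?, (IsCollider E a b c → p b) ∧ (¬ IsCollider E a b c → q b)
  | _ => True

variable {E} {p q : V → Prop}

theorem OpenWalk.mono {p' q' : V → Prop} (hp : ∀ v, p v → p' v) (hq : ∀ v, q v → q' v) :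
    ∀ {l : List V}, OpenWalk E p q l → OpenWalk E p' q' l
  | [], _ => trivial
  | [_], _ => trivial
  | _ :: _ :: _, ⟨h₁, h₂, h₃⟩ =>
    ⟨h₁, h₂.mono hp hq,
      fun c hc => ⟨fun hn => hp _ ((h₃ c hc).1 hn), fun hn => hq _ ((h₃ c hc).2 hn)⟩⟩

theorem OpenWalk.tail {a : V} : ∀ {l : List V}, OpenWalk E p q (a :: l) → OpenWalk E p q l
  | [], _ => trivial
  | _ :: _, h => h.2.1

theorem OpenWalk.right : ∀ {l₁ l₂ : List V}, OpenWalk E p q (l₁ ++ l₂) → OpenWalk E p q l₂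
  | [], _, h => h
  | _ :: _, _, h => OpenWalk.right (OpenWalk.tail h)

theorem OpenWalk.left : ∀ {l₁ l₂ : List V}, OpenWalk E p q (l₁ ++ l₂) → OpenWalk E p q l₁
  | [], _, _ => trivial
  | [_], _, _ => trivial
  | _ :: b :: l, l₂, h => by
    obtain ⟨h₁, h₂, h₃⟩ := h
    refine ⟨h₁, OpenWalk.left (l₂ := l₂) h₂, fun c hc => h₃ c ?_⟩
    cases l <;> simp_all

theorem OpenWalk.triple {l₁ l₂ : List V} {a b c : V}
    (h : OpenWalk E p q (l₁ ++ a :: b :: c :: l₂)) :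
    (IsCollider E a b c → p b) ∧ (¬ IsCollider E a b c → q b) :=
  h.right.2.2 c (by simp)

theorem OpenWalk.glue {v : V} {l₃ : List V} : ∀ {l₁ : List V}, OpenWalk E p q (l₁ ++ [v]) →
    OpenWalk E p q (v :: l₃) →
    (∀ a ∈ l₁.getLast?, ∀ c ∈ l₃.head?,
      (IsCollider E a v c → p v) ∧ (¬ IsCollider E a v c → q v)) →
    OpenWalk E p q (l₁ ++ v :: l₃)
  | [], _, h, _ => h
  | [a], h, h', h'' => ⟨h.1, h', by simpa using h'' a⟩
  | a :: b :: l, h, h', h'' => by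
    obtain ⟨h₁, h₂, h₃⟩ := h
    refine ⟨h₁, OpenWalk.glue (l₁ := b :: l) h₂ h' ?_, fun c hc => h₃ c ?_⟩
    · simpa [List.getLast?_cons_cons] using h''
    · cases l <;> simp_all

theorem OpenWalk.chain : ∀ {l : List V}, OpenWalk E p q l →
    l.IsChain (fun a b => E a b ∨ E b a)
  | [], _ => .nil
  | [_], _ => .singleton _
  | _ :: _ :: _, h => .cons_cons h.1 h.2.1.chain

/-- A walk leaving `v` forwards either is directed or meets a collider below `v`. -/
theorem OpenWalk.forward (hp : ∀ a b, E a b → p b → p a) :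
    ∀ {l : List V} {v x y : V}, OpenWalk E p q (v :: x :: l) → E v x →
      (x :: l).getLast? = some y → Relation.TransGen E v y ∨ p v
  | [], v, x, y, _, hvx, hy => by
    simp at hy
    exact .inl (hy ▸ .single hvx)
  | z :: l, v, x, y, h, hvx, hy => by
    by_cases hxz : E x z
    · rcases OpenWalk.forward hp h.tail hxz (by simpa [List.getLast?_cons_cons] using hy)
        with h' | h'
      · exact .inl (.head hvx h')
      · exact .inr (hp _ _ hvx h')
    · have hzx : E z x := h.tail.1.resolve_left hxz
      exact .inr (hp _ _ hvx ((h.2.2 z (by simp)).1 ⟨hvx, hzx⟩))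

/-- Removing a loop keeps a walk open. -/
theorem OpenWalk.remove_loop (hE : ∀ v, ¬ Relation.TransGen E v v)
    (hp : ∀ a b, E a b → p b → p a) {l₁ l₂ l₃ : List V} {v : V}
    (h : OpenWalk E p q (l₁ ++ v :: (l₂ ++ v :: l₃))) : OpenWalk E p q (l₁ ++ v :: l₃) := by
  have hr : OpenWalk E p q ((l₁ ++ v :: l₂) ++ v :: l₃) := by simpa using h
  refine OpenWalk.glue (OpenWalk.left (l₂ := l₂ ++ v :: l₃) (by simpa using h)) hr.right ?_
  intro a ha c hc
  obtain ⟨l₁, rfl⟩ : ∃ l, l₁ = l ++ [a] := by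
    rw [Option.mem_def, List.getLast?_eq_some_iff] at ha
    exact ha
  obtain ⟨l₃, rfl⟩ : ∃ l, l₃ = c :: l := by
    cases l₃ <;> simp_all
  obtain ⟨x, m, hm⟩ : ∃ x m, l₂ ++ [v] = x :: m := by
    cases l₂ <;> simp
  obtain ⟨y, m', hm'⟩ : ∃ y m', v :: l₂ = m' ++ [y] :=
    ⟨_, _, (List.dropLast_append_getLast (by simp)).symm⟩
  have h₁ : OpenWalk E p q (l₁ ++ a :: v :: x :: (m ++ c :: l₃)) := by
    have : l₁ ++ a :: v :: x :: (m ++ c :: l₃) =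
        l₁ ++ [a] ++ v :: (l₂ ++ v :: c :: l₃) := by
      have : x :: (m ++ c :: l₃) = (x :: m) ++ c :: l₃ := rfl
      rw [this, ← hm]; simp
    rw [this]; exact h
  have h₂ : OpenWalk E p q ((l₁ ++ [a] ++ m') ++ y :: v :: c :: l₃) := by
    have : (l₁ ++ [a] ++ m') ++ y :: v :: c :: l₃ =
        l₁ ++ [a] ++ (m' ++ [y]) ++ v :: c :: l₃ := by simp
    rw [this, ← hm']; simpa using h
  constructor
  · intro hcol
    by_cases hxv : E x v
    · exact h₁.triple.1 ⟨hcol.1, hxv⟩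
    have hl : OpenWalk E p q (v :: x :: m) := by
      rw [← hm]
      refine OpenWalk.left (l₂ := c :: l₃) ?_
      simpa using h.right (l₁ := l₁ ++ [a])
    refine (hl.forward (y := v) hp (hl.1.resolve_right hxv) ?_).resolve_left (hE v)
    rw [← hm]; simp
  · intro hncol
    by_cases hav : E a v
    · exact h₂.triple.2 fun hcol => hncol ⟨hav, hcol.2⟩
    · exact h₁.triple.2 fun hcol => hav hcol.1

/-- An open walk contains an open path with the same ends. -/
theorem OpenWalk.exists_nodup (hE : ∀ v, ¬ Relation.TransGen E v v)
    (hp : ∀ a b, E a b → p b → p a) {s t : V} (l : List V) (h : OpenWalk E p q l)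
    (hs : l.head? = some s) (ht : l.getLast? = some t) :
    ∃ l', OpenWalk E p q l' ∧ l'.Nodup ∧ l'.head? = some s ∧ l'.getLast? = some t := by
  induction hn : l.length using Nat.strong_induction_on generalizing l with
  | _ n ih =>
    by_cases hd : l.Nodup
    · exact ⟨l, h, hd, hs, ht⟩
    obtain ⟨l₁, l₂, l₃, v, rfl⟩ : ∃ l₁ l₂ l₃ v, l = l₁ ++ v :: (l₂ ++ v :: l₃) := by
      obtain ⟨v, hv⟩ : ∃ v, List.Duplicate v l := by
        by_contra! hv
        exact hd (List.nodup_iff_forall_not_duplicate.2 hv)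
      clear h hs ht hn hd ih
      induction hv with
      | cons_mem hm =>
        obtain ⟨l₂, l₃, rfl⟩ := List.append_of_mem hm
        exact ⟨[], l₂, l₃, v, rfl⟩
      | @cons_duplicate y l hv ih =>
        obtain ⟨l₁, l₂, l₃, v, rfl⟩ := ih
        exact ⟨y :: l₁, l₂, l₃, v, rfl⟩
    refine ih _ ?_ _ (h.remove_loop hE hp) ?_ ?_ rfl
    · rw [← hn]; simp
    · cases l₁ <;> simp_all
    · simpa [List.getLast?_append, List.getLast?_cons] using ht

theorem OpenWalk.not_dSep {Z : Set V} (hE : ∀ v, ¬ Relation.TransGen E v v) {s t : V}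
    {l : List V}
    (h : OpenWalk E (fun v => ∃ w ∈ Z, Relation.ReflTransGen E v w) (fun v => v ∉ Z) l)
    (hs : l.head? = some s) (ht : l.getLast? = some t) : ¬ DSep E {s} {t} Z := by
  intro hsep
  obtain ⟨l', h', hnd, hs', ht'⟩ := h.exists_nodup hE
    (fun a b hab ⟨w, hw, hbw⟩ => ⟨w, hw, .head hab hbw⟩) l hs ht
  obtain ⟨l₁, a, b, c, l₂, rfl, hb⟩ := hsep l'
    ⟨by rintro rfl; simp at hs', hnd, h'.chain⟩ ⟨s, rfl, hs'⟩ ⟨t, rfl, ht'⟩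
  rcases hb with ⟨hn, hb⟩ | ⟨hc, hb⟩
  · exact h'.triple.2 hn hb
  · obtain ⟨w, hw, hbw⟩ := h'.triple.1 hc
    exact hb w hbw hw

end Walks

namespace CID

variable {V : Type} (G : CID V)

theorem not_edge_self (v : V) : ¬ G.edge v v :=
  fun h => G.acyclic v (.single h)

theorem not_mem_utility {v w : V} (h : G.edge v w) : v ∉ G.utility :=
  fun hv => G.utility_no_children v hv w h

theorem ne_decision_of_edge {w : V} (h : G.edge w G.decision) :
    w ≠ G.decision := by
  rintro rfl
  exact G.not_edge_self _ h

theorem not_decision_ancestor {w : V} (h : G.edge w G.decision) :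
    ¬ Relation.ReflTransGen G.edge G.decision w :=
  fun h' => G.acyclic w (.head' h h')

/-- `x` belongs to the family of `v`. -/
def InFamily (v x : V) : Prop := x = v ∨ G.edge x v

/-- The utility nodes that the decision can influence. -/
def Influenced (u : V) : Prop :=
  u ∈ G.utility ∧ Relation.ReflTransGen G.edge G.decision u

/-- Ancestors of the decision or of an influenced utility node. -/
def Relevant (v : V) : Prop :=
  Relation.ReflTransGen G.edge v G.decision ∨
    ∃ u, G.Influenced u ∧ Relation.ReflTransGen G.edge v u

/-- Vertices outside the family of the decision which are connected to an influenced
utility node in the moral graph on the relevant vertices, off the family of the decision. -/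
inductive Linked : V → Prop
  | base {u : V} : G.Influenced u → Linked u
  | step {v x y : V} : Linked x → ¬ G.InFamily G.decision y → G.Relevant v →
      v ≠ G.decision → G.InFamily v x → G.InFamily v y → Linked y

variable {G}

theorem asymm {a b : V} (h : G.edge a b) : ¬ G.edge b a := fun h' =>
  G.acyclic a (.head h (.single h'))

theorem InFamily.reach {v x : V} (h : G.InFamily v x) : Relation.ReflTransGen G.edge x v := by
  rcases h with rfl | h
  · exact .refl
  · exact .single h

theorem Relevant.of_reach {v x : V} (h : G.Relevant v)
    (hx : Relation.ReflTransGen G.edge x v) : G.Relevant x :=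
  h.imp hx.trans fun ⟨u, hu, hv⟩ => ⟨u, hu, hx.trans hv⟩

theorem Influenced.not_inFamily {u : V} (h : G.Influenced u) :
    ¬ G.InFamily G.decision u := by
  rintro (rfl | h')
  · exact G.decision_not_utility h.1
  · exact G.utility_no_children u h.1 _ h'

theorem Linked.not_inFamily {x : V} (h : G.Linked x) : ¬ G.InFamily G.decision x := by
  cases h with
  | base h => exact h.not_inFamily
  | step _ h => exact h

theorem Linked.relevant {x : V} (h : G.Linked x) : G.Relevant x := by
  cases h with
  | base h => exact .inr ⟨_, h, .refl⟩
  | step _ _ hv _ _ hy => exact hv.of_reach hy.reach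

theorem Linked.of_decision_parent {v : V} (hv : G.Relevant v)
    (h : G.edge G.decision v) : G.Linked v := by
  rcases hv with hv | ⟨u, hu, hv⟩
  · exact (G.acyclic _ (.head' h hv)).elim
  have hd : Relation.TransGen G.edge G.decision v := .single h
  clear h
  induction hv using Relation.ReflTransGen.head_induction_on with
  | refl => exact .base hu
  | @head a c hac hcu ih =>
    have hc := hd.tail hac
    refine .step (v := c) (ih hc) ?_ (.inr ⟨u, hu, hcu⟩) ?_ (.inl rfl) (.inr hac)
    · intro hf
      exact G.acyclic _ (hd.trans_left hf.reach)
    · rintro rfl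
      exact G.acyclic _ hc

variable (G) in
/-- There is an open walk given the family of the decision from `y` to an influenced utility
node, whose continuation beyond `y` stays open. -/
def Escapes (y : V) : Prop :=
  ∃ l u, OpenWalk G.edge (fun v => Relation.ReflTransGen G.edge v G.decision)
      (fun v => ¬ G.InFamily G.decision v) (y :: l) ∧
    G.Influenced u ∧ (y :: l).getLast? = some u ∧
    (Relation.ReflTransGen G.edge y G.decision ∨ ∀ z ∈ l.head?, G.edge y z)

theorem Escapes.of_not_reach {y : V} (h : G.Relevant y)
    (hy : ¬ Relation.ReflTransGen G.edge y G.decision) : G.Escapes y := by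
  obtain ⟨u, hu, hyu⟩ := h.resolve_left hy
  induction hyu using Relation.ReflTransGen.head_induction_on with
  | refl => exact ⟨[], u, trivial, hu, rfl, .inr (by simp)⟩
  | @head a c hac hcu ih =>
    have hc : ¬ Relation.ReflTransGen G.edge c G.decision := fun h => hy (.head hac h)
    obtain ⟨l, u', hl, hu', hlast, hfw⟩ := ih (.inr ⟨u, hu, hcu⟩) hc
    refine ⟨c :: l, u', ⟨.inl hac, hl, fun z hz => ⟨fun hcol => ?_, fun _ hf => ?_⟩⟩, hu',
      by simpa [List.getLast?_cons_cons] using hlast, .inr (by simpa using hac)⟩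
    · exact (asymm (hfw.resolve_left hc z hz) hcol.2).elim
    · exact hc hf.reach

theorem Escapes.adjacent {x y : V} (h : G.Escapes x) (hx : ¬ G.InFamily G.decision x)
    (hy : Relation.ReflTransGen G.edge y G.decision) (hyx : G.edge y x ∨ G.edge x y) :
    G.Escapes y := by
  obtain ⟨l, u, hl, hu, hlast, hfw⟩ := h
  refine ⟨x :: l, u, ⟨hyx, hl, fun z hz => ⟨fun hcol => ?_, fun _ => hx⟩⟩, hu,
    by simpa [List.getLast?_cons_cons] using hlast, .inl hy⟩
  exact hfw.resolve_right fun h => asymm (h z hz) hcol.2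

theorem Escapes.coparent {v x y : V} (h : G.Escapes x) (hx : ¬ G.InFamily G.decision x)
    (hv : G.Relevant v) (hvx : G.InFamily v x) (hvy : G.InFamily v y) : G.Escapes y := by
  by_cases hy : Relation.ReflTransGen G.edge y G.decision
  swap
  · exact .of_not_reach (hv.of_reach hvy.reach) hy
  rcases hvx with rfl | hvx <;> rcases hvy with rfl | hvy
  · exact h
  · exact h.adjacent hx hy (.inl hvy)
  · exact h.adjacent hx hy (.inr hvx)
  by_cases hvd : Relation.ReflTransGen G.edge v G.decision
  · obtain ⟨l, u, hl, hu, hlast, hfw⟩ := h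
    refine ⟨v :: x :: l, u, ⟨.inl hvy, ⟨.inr hvx, hl, fun z hz => ⟨fun hcol => ?_, fun _ => hx⟩⟩,
      fun z hz => ⟨fun _ => hvd, fun hncol => ?_⟩⟩, hu,
      by simpa [List.getLast?_cons_cons] using hlast, .inl hy⟩
    · exact hfw.resolve_right fun h => asymm (h z hz) hcol.2
    · simp only [List.head?_cons, Option.mem_def, Option.some.injEq] at hz
      exact (hncol ⟨hvy, hz ▸ hvx⟩).elim
  · exact (Escapes.of_not_reach hv hvd).adjacent (fun hf => hvd hf.reach) hy (.inl hvy)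

theorem Linked.escapes {x : V} (h : G.Linked x) : G.Escapes x := by
  induction h with
  | base h => exact ⟨[], _, trivial, h, rfl, .inr (by simp)⟩
  | step hx _ hv _ hvx hvy ih => exact ih.coparent hx.not_inFamily hv hvx hvy

/-- A parent of the decision sharing a family with a linked vertex is d-connected to an
influenced utility node. -/
theorem Linked.exists_not_dSep {v x W : V} (h : G.Linked x) (hv : G.Relevant v)
    (hvx : G.InFamily v x) (hvW : G.InFamily v W) (hW : G.edge W G.decision) :
    ∃ u, G.Influenced u ∧
      ¬ DSep G.edge {W} {u} (({G.decision} ∪ {w | G.edge w G.decision}) \ {W}) := by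
  obtain ⟨l, u, hl, hu, hlast, -⟩ := h.escapes.coparent h.not_inFamily hv hvx hvW
  refine ⟨u, hu, ?_⟩
  have hD : G.decision ∈ (({G.decision} ∪ {w | G.edge w G.decision}) \ {W} : Set V) :=
    ⟨.inl rfl, fun h => G.acyclic W (.single (by rw [Set.mem_singleton_iff] at h; exact h ▸ hW))⟩
  refine OpenWalk.not_dSep (l := W :: l) G.acyclic ?_ rfl hlast
  exact hl.mono (fun v hv => ⟨_, hD, hv⟩) fun v hv hz => hv hz.1

end CID

section Resample

variable {ι : Type} [Fintype ι] [DecidableEq ι] {β : ι → Type} [∀ i, Fintype (β i)]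

/-- The configuration agreeing with `c` on `S` and with `a` elsewhere. -/
noncomputable def splice (S : ι → Prop) (c a : ∀ i, β i) : ∀ i, β i :=
  fun i => if S i then c i else a i

theorem splice_of_mem {S : ι → Prop} (c a : ∀ i, β i) {i : ι} (h : S i) :
    splice S c a i = c i := if_pos h

theorem splice_of_not_mem {S : ι → Prop} (c a : ∀ i, β i) {i : ι} (h : ¬ S i) :
    splice S c a i = a i := if_neg h

theorem sum_sum_splice (S : ι → Prop) (F : (∀ i, β i) → ℝ) :
    ∑ a, ∑ c, F (splice S c a) = Fintype.card (∀ i, β i) * ∑ a, F a := by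
  have hinv : Function.Involutive
      (fun x : (∀ i, β i) × (∀ i, β i) => (splice S x.2 x.1, splice S x.1 x.2)) := by
    rintro ⟨a, c⟩
    refine Prod.ext (funext fun i => ?_) (funext fun i => ?_) <;> by_cases h : S i <;>
      simp [splice, h]
  rw [← Fintype.sum_prod_type' (f := fun a c => F (splice S c a)),
    ← Equiv.sum_comp (hinv.toPerm _)]
  have : ∀ x : (∀ i, β i) × (∀ i, β i),
      splice S (hinv.toPerm _ x).2 (hinv.toPerm _ x).1 = x.1 := by
    rintro ⟨a, c⟩
    funext i
    by_cases h : S i <;> simp [splice, h]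
  simp_rw [this]
  rw [Fintype.sum_prod_type' (f := fun a _ => F a)]
  simp [Finset.mul_sum]

/-- Expected reward of a decision kernel at coordinate `D` when the remaining weight does
not depend on the coordinates in `S`: it is at most that of the kernel which always
picks the best response to the averaged reward. -/
theorem sum_kernel_le (S : ι → Prop) (D : ι) (hD : S D) (q q' : β D → (∀ i, β i) → ℝ)
    (H R : (∀ i, β i) → ℝ) (hq : ∀ d a, 0 ≤ q d a) (hq1 : ∀ a, ∑ d, q d a = 1)
    (hqS : ∀ d c a, q d (splice S c a) = q d a)
    (hqS' : ∀ d c a, q' d (splice S c a) = q' d a)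
    (hH : ∀ a, 0 ≤ H a) (hHS : ∀ c a, H (splice S c a) = H a) (best : (∀ i, β i) → β D)
    (hbest : ∀ a d, ∑ c : ∀ i, β i, (if c D = d then R (splice S c a) else 0) ≤
      ∑ c : ∀ i, β i, if c D = best a then R (splice S c a) else 0)
    (hq' : ∀ d a, q' d a = if best a = d then 1 else 0) :
    ∑ a, q (a D) a * (H a * R a) ≤ ∑ a, q' (a D) a * (H a * R a) := by
  have key (k : β D → (∀ i, β i) → ℝ) (hk : ∀ d c a, k d (splice S c a) = k d a) :
      Fintype.card (∀ i, β i) * ∑ a, k (a D) a * (H a * R a) =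
        ∑ a, H a * ∑ d, k d a *
          ∑ c : ∀ i, β i, if c D = d then R (splice S c a) else 0 := by
    rw [← sum_sum_splice S]
    refine Finset.sum_congr rfl fun a _ => ?_
    simp_rw [Finset.mul_sum]
    rw [Finset.sum_comm]
    refine Finset.sum_congr rfl fun c _ => ?_
    simp only [mul_ite, mul_zero, Finset.sum_ite_eq, Finset.mem_univ, if_true]
    rw [hk, hHS, splice_of_mem _ _ hD]
    ring
  rcases isEmpty_or_nonempty (∀ i, β i) with h | h
  · simp
  have hpos : (0 : ℝ) < Fintype.card (∀ i, β i) := by exact_mod_cast Fintype.card_pos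
  refine le_of_mul_le_mul_left ?_ hpos
  rw [key q hqS, key q' hqS']
  refine Finset.sum_le_sum fun a _ => mul_le_mul_of_nonneg_left ?_ (hH a)
  simp only [hq', ite_mul, one_mul, zero_mul, Finset.sum_ite_eq, Finset.mem_univ, if_true]
  calc _ ≤ ∑ d, q d a * ∑ c : ∀ i, β i, (if c D = best a then R (splice S c a) else 0) :=
        Finset.sum_le_sum fun d _ => mul_le_mul_of_nonneg_left (hbest a d) (hq d a)
    _ = _ := by rw [← Finset.sum_mul, hq1, one_mul]

end Resample

namespace SCIM

variable {V : Type} [Fintype V] [DecidableEq V] (M : SCIM V)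

/-- The value of the utility nodes the decision can influence. -/
noncomputable def influencedUtil (a : ∀ v, M.dom v) : ℝ :=
  ∑ u ∈ M.utility with Relation.ReflTransGen M.edge M.decision u, M.utilVal u (a u)

theorem EU_le_iff (π π' : M.Policy) : M.EU π ≤ M.EU π' ↔
    ∑ ε : M.Env, M.prob ε * M.influencedUtil (M.val π ε) ≤
      ∑ ε : M.Env, M.prob ε * M.influencedUtil (M.val π' ε) := by
  have h (π : M.Policy) : M.EU π = ∑ ε : M.Env, M.prob ε * M.influencedUtil (M.val π ε) +
      ∑ ε : M.Env, M.prob ε *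
        ∑ u ∈ M.utility with ¬ Relation.ReflTransGen M.edge M.decision u,
          M.utilVal u (M.val π ε u) := by
    unfold EU totUtil influencedUtil
    rw [← Finset.sum_add_distrib]
    refine Finset.sum_congr rfl fun ε _ => ?_
    rw [← mul_add, Finset.sum_filter_add_sum_filter_not]
  have h' : ∑ ε : M.Env, M.prob ε *
        ∑ u ∈ M.utility with ¬ Relation.ReflTransGen M.edge M.decision u,
          M.utilVal u (M.val π ε u) = ∑ ε : M.Env, M.prob ε *
        ∑ u ∈ M.utility with ¬ Relation.ReflTransGen M.edge M.decision u,
          M.utilVal u (M.val π' ε u) := by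
    refine Finset.sum_congr rfl fun ε _ => congrArg _ (Finset.sum_congr rfl fun u hu => ?_)
    rw [M.val_congr_policy π π' ε (Finset.mem_filter.1 hu).2]
  rw [h, h, h', add_le_add_iff_right]

/-- The mechanisms under a policy, with irrelevant variables made constant. -/
noncomputable def relMech (π : M.Policy) : ∀ v, M.Mechanism v :=
  fun v => if M.Relevant v then M.polMech π v else fun _ _ => Classical.arbitrary _

theorem influencedUtil_relMech (π : M.Policy) (ε : M.Env) :
    M.influencedUtil (M.solve (M.relMech π) ε) = M.influencedUtil (M.val π ε) := by
  refine Finset.sum_congr rfl fun u hu => ?_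
  rw [Finset.mem_filter] at hu
  rw [val, M.solve_congr (mech' := M.polMech π) ε u fun w hw => ?_]
  exact if_pos (.inr ⟨u, hu, hw⟩)

theorem factor_congr {mech mech' : ∀ v, M.Mechanism v} {a a' : ∀ v, M.dom v} {v : V}
    (hm : mech v = mech' v) (h : ∀ w, M.InFamily v w → a w = a' w) :
    M.factor mech a v = M.factor mech' a' v := by
  unfold factor
  have : (fun w (_ : M.edge w v) => a w) = fun w _ => a' w := by
    funext w hw
    exact h w (.inr hw)
  rw [this, h v (.inl rfl), hm]

/-- The factor of `v` involves a linked vertex. -/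
def Touches (v : V) : Prop := M.Relevant v ∧ ∃ x, M.Linked x ∧ M.InFamily v x

/-- The linked vertices, together with the decision. -/
def Inner (v : V) : Prop := M.Linked v ∨ v = M.decision

/-- Parents of the decision whose observation may be needed. -/
def Requisite (W : V) : Prop :=
  M.edge W M.decision ∧ ∃ u, M.Influenced u ∧
    ¬ DSep M.edge {W} {u} (({M.decision} ∪ {w | M.edge w M.decision}) \ {W})

theorem Touches.inFamily {v w : V} (hv : M.Touches v) (hne : v ≠ M.decision)
    (hw : M.InFamily v w) : M.Inner w ∨ M.Requisite w := by
  obtain ⟨hr, x, hx, hvx⟩ := hv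
  by_cases h : M.InFamily M.decision w
  · rcases h with h | h
    · exact .inl (.inr h)
    · exact .inr ⟨h, hx.exists_not_dSep hr hvx hw h⟩
  · exact .inl (.inl (.step hx h hr hne hvx hw))

theorem not_inner_of_parent {w : V} (h : M.edge w M.decision) : ¬ M.Inner w := by
  rintro (h' | rfl)
  · exact h'.not_inFamily (.inr h)
  · exact M.acyclic _ (.single h)

variable (π₀ : M.Policy)

/-- The part of the Markov factorization, apart from the decision, seen by the linked
vertices, times the reward. -/
noncomputable def reward (a : ∀ v, M.dom v) : ℝ :=
  (∏ v with v ≠ M.decision ∧ M.Touches v, M.factor (M.relMech π₀) a v) * M.influencedUtil a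

/-- The remaining part of the Markov factorization. -/
noncomputable def weight (a : ∀ v, M.dom v) : ℝ :=
  ∏ v with v ≠ M.decision ∧ ¬ M.Touches v, M.factor (M.relMech π₀) a v

theorem weight_nonneg (a : ∀ v, M.dom v) : 0 ≤ M.weight π₀ a :=
  Finset.prod_nonneg fun _ _ => M.factor_nonneg _ _ _

theorem weight_congr {a a' : ∀ v, M.dom v} (h : ∀ v, ¬ M.Inner v → a v = a' v) :
    M.weight π₀ a = M.weight π₀ a' := by
  refine Finset.prod_congr rfl fun v hv => ?_
  obtain ⟨hne, ht⟩ := (Finset.mem_filter.1 hv).2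
  by_cases hr : M.Relevant v
  · refine M.factor_congr rfl fun w hw => h w ?_
    rintro (hl | rfl)
    · exact ht ⟨hr, w, hl, hw⟩
    · rcases hw with hw | hw
      · exact hne hw.symm
      · exact ht ⟨hr, v, .of_decision_parent hr hw, .inl rfl⟩
  · have hv : ¬ M.Inner v := by
      rintro (hl | hd)
      · exact hr hl.relevant
      · exact hne hd
    simp [factor, relMech, hr, h v hv]

theorem reward_congr {a a' : ∀ v, M.dom v} (h : ∀ v, M.Inner v ∨ M.Requisite v → a v = a' v) :
    M.reward π₀ a = M.reward π₀ a' := by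
  unfold reward influencedUtil
  congr 1
  · refine Finset.prod_congr rfl fun v hv => ?_
    obtain ⟨hne, ht⟩ := (Finset.mem_filter.1 hv).2
    exact M.factor_congr rfl fun w hw => h w (ht.inFamily M hne hw)
  · refine Finset.sum_congr rfl fun u hu => ?_
    rw [h u (.inl (.inl (.base (Finset.mem_filter.1 hu))))]

/-- Conditional probability of the decision `d` in the context given by `a`. -/
noncomputable def kernel (π : M.Policy) (d : M.dom M.decision) (a : ∀ v, M.dom v) : ℝ :=
  ∑ e, if π (fun w _ => a w) e = d then M.μ M.decision e else 0

theorem sum_kernel (π : M.Policy) (a : ∀ v, M.dom v) : ∑ d, M.kernel π d a = 1 := by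
  unfold kernel
  rw [Finset.sum_comm]
  simpa using M.μ_sum M.decision

theorem sum_prob_mul_influencedUtil (π : M.Policy) :
    ∑ ε : M.Env, M.prob ε * M.influencedUtil (M.val π ε) =
      ∑ a : ∀ v, M.dom v,
        M.kernel π (a M.decision) a * (M.weight π₀ a * M.reward π₀ a) := by
  simp_rw [← influencedUtil_relMech]
  rw [sum_prob_mul_solve]
  refine Finset.sum_congr rfl fun a _ => ?_
  have hk : M.factor (M.relMech π) a M.decision = M.kernel π (a M.decision) a := by
    have : M.relMech π M.decision = π :=
      (if_pos (Or.inl .refl)).trans (M.polMech_decision π)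
    rw [factor, this, kernel]
  have hrest : ∏ v with v ≠ M.decision, M.factor (M.relMech π) a v =
      ∏ v with v ≠ M.decision, M.factor (M.relMech π₀) a v := by
    refine Finset.prod_congr rfl fun v hv => M.factor_congr ?_ fun _ _ => rfl
    have := (Finset.mem_filter.1 hv).2
    simp only [relMech, polMech_of_ne _ _ this]
  rw [← Finset.prod_filter_mul_prod_filter_not _ (fun v => v = M.decision), hrest,
    ← Finset.prod_filter_mul_prod_filter_not (Finset.univ.filter fun v => v ≠ M.decision)
      (fun v => M.Touches v), Finset.filter_filter, Finset.filter_filter]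
  simp only [Finset.filter_eq', Finset.mem_univ, if_true, Finset.prod_singleton]
  rw [hk, weight, reward]
  ring

/-- Some optimal policy responds to requisite observations only. -/
theorem exists_optimal_requisite : ∃ π : M.Policy, M.Optimal π ∧
    ∀ pa pa' : M.Ctx, (∀ w h, M.Requisite w → pa w h = pa' w h) →
      ∀ e, π pa e = π pa' e := by
  have π₀ : M.Policy := fun _ _ => Classical.arbitrary _
  have hmax (g : M.dom M.decision → ℝ) : ∃ d, ∀ d', g d' ≤ g d := Finite.exists_max g
  choose am ham using hmax
  let avg (a : ∀ v, M.dom v) (d : M.dom M.decision) : ℝ :=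
    ∑ c : ∀ v, M.dom v, if c M.decision = d then M.reward π₀ (splice M.Inner c a) else 0
  have havg (a a' : ∀ v, M.dom v) (h : ∀ w, M.Requisite w → a w = a' w) : avg a = avg a' := by
    funext d
    refine Finset.sum_congr rfl fun c _ => ?_
    rw [M.reward_congr π₀ (a' := splice M.Inner c a')]
    intro v hv
    by_cases hi : M.Inner v
    · rw [splice_of_mem _ _ hi, splice_of_mem _ _ hi]
    · rw [splice_of_not_mem _ _ hi, splice_of_not_mem _ _ hi, h v (hv.resolve_left hi)]
  let extend (pa : M.Ctx) : ∀ v, M.dom v :=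
    fun w => if h : M.edge w M.decision then pa w h else Classical.arbitrary _
  have hext (pa : M.Ctx) {w : V} (h : M.edge w M.decision) : extend pa w = pa w h := dif_pos h
  let best : M.Policy := fun pa _ => am (avg (extend pa))
  refine ⟨best, fun π => ?_, fun pa pa' h e => ?_⟩
  · rw [EU_le_iff, sum_prob_mul_influencedUtil _ π₀, sum_prob_mul_influencedUtil _ π₀]
    have hker (π : M.Policy) (d : M.dom M.decision) (c a : ∀ v, M.dom v) :
        M.kernel π d (splice M.Inner c a) = M.kernel π d a := by
      unfold kernel
      have : (fun w (_ : M.edge w M.decision) => splice M.Inner c a w) = fun w _ => a w := by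
        funext w hw
        exact splice_of_not_mem _ _ (M.not_inner_of_parent hw)
      rw [this]
    refine sum_kernel_le M.Inner M.decision (.inr rfl) _ _ _ _ ?_ (M.sum_kernel π) (hker π)
      (hker _) (M.weight_nonneg π₀) ?_ (fun a => am (avg a)) (fun a d => ham (avg a) d) ?_
    · exact fun d a => Finset.sum_nonneg fun e _ => by split_ifs <;> simp [M.μ_nonneg]
    · exact fun c a => M.weight_congr π₀ fun v hv => splice_of_not_mem _ _ hv
    · intro d a
      have : avg (extend fun w _ => a w) = avg a := havg _ _ fun w hw => hext (fun w _ => a w) hw.1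
      simp only [kernel, best, this]
      split_ifs
      · exact M.μ_sum _
      · simp
  · simp only [best, havg (extend pa) (extend pa') fun w hw => by
      rw [hext _ hw.1, hext _ hw.1, h w hw.1 hw]]

theorem ResponseIncentive.riCriterion {X : V} (hX : X ≠ M.decision)
    (h : M.ResponseIncentive X) : RICriterion M.toCID X := by
  obtain ⟨π, hopt, hπ⟩ := M.exists_optimal_requisite
  obtain ⟨x, ε, hne⟩ := h π hopt
  by_contra hcrit
  refine hne ?_
  rw [valDo_decision _ _ hX, val_decision]
  refine hπ _ _ (fun w hw hreq => M.valDo_of_not_descendant π x ε fun hXw => hcrit ?_) _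
  obtain ⟨-, u, hu, hsep⟩ := hreq
  exact ⟨w, hw, u, hu.1, hXw, hu.2, hsep⟩

end SCIM

/-- A path between an observation and an influenced utility node, open given the other
members of the family of the decision, with functions `prev` and `next` walking along it. -/
structure SignalPath {V : Type} (G : CID V) where
  p : ℕ → V
  n : ℕ
  prev : V → V
  next : V → V
  prev_p : ∀ i ≤ n, prev (p i) = p (i - 1)
  next_p : ∀ i < n, next (p i) = p (i + 1)
  pos : 0 < n
  adj : ∀ i < n, G.edge (p i) (p (i + 1)) ∨ G.edge (p (i + 1)) (p i)
  observed : G.edge (p 0) G.decision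
  influenced : G.Influenced (p n)
  ne_decision : ∀ i ≤ n, p i ≠ G.decision
  collider : ∀ i, i + 1 < n → IsCollider G.edge (p i) (p (i + 1)) (p (i + 2)) →
    Relation.ReflTransGen G.edge (p (i + 1)) G.decision
  not_collider : ∀ i, i + 1 < n → ¬ IsCollider G.edge (p i) (p (i + 1)) (p (i + 2)) →
    ¬ G.edge (p (i + 1)) G.decision
  next_last : next (p n) = p n

theorem exists_signalPath {V : Type} (G : CID V) {W u : V} (hW : G.edge W G.decision)
    (hu : G.Influenced u)
    (h : ¬ DSep G.edge {W} {u} (({G.decision} ∪ {w | G.edge w G.decision}) \ {W})) :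
    ∃ S : SignalPath G, S.p 0 = W := by
  simp only [DSep, not_forall] at h
  obtain ⟨L, ⟨-, hnd, hch⟩, ⟨s, hs, hLs⟩, ⟨t, ht, hLt⟩, hb⟩ := h
  rw [Set.mem_singleton_iff] at hs ht
  subst s t
  have hWu : W ≠ u := fun h => G.utility_no_children u hu.1 _ (h ▸ hW)
  have hWD : W ≠ G.decision := fun h => G.acyclic W (.single (by nth_rw 2 [h]; exact hW))
  obtain ⟨n, hn⟩ : ∃ n, L.length = n + 1 := by
    cases L <;> simp_all
  let p : ℕ → V := fun i => L.getD i u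
  have hp (i : ℕ) (hi : i < L.length) : p i = L[i] := by simp [p, hi]
  have hp0 : p 0 = W := by
    cases L <;> simp_all [p]
  have hpn : p n = u := by
    rw [hp n (by omega)]
    rw [List.getLast?_eq_getElem?, hn] at hLt
    simpa [hn] using hLt
  have hn0 : 0 < n := Nat.pos_of_ne_zero fun h => hWu (by rw [← hp0, ← hpn, h])
  have hinj (i j : ℕ) (hi : i ≤ n) (hj : j ≤ n) (h : p i = p j) : i = j := by
    rw [hp i (by omega), hp j (by omega)] at h
    exact (hnd.getElem_inj_iff).1 h
  have hadj (i : ℕ) (hi : i < n) : G.edge (p i) (p (i + 1)) ∨ G.edge (p (i + 1)) (p i) := by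
    rw [hp i (by omega), hp (i + 1) (by omega)]
    exact List.isChain_iff_getElem.1 hch i (by omega)
  have hopen (i : ℕ) (hi : i + 1 < n) : ¬ BlockedTriple G.edge
      (({G.decision} ∪ {w | G.edge w G.decision}) \ {W}) (p i) (p (i + 1)) (p (i + 2)) := by
    intro hbt
    refine hb ⟨L.take i, p i, p (i + 1), p (i + 2), L.drop (i + 3), ?_, hbt⟩
    rw [hp i (by omega), hp (i + 1) (by omega), hp (i + 2) (by omega),
      ← List.drop_eq_getElem_cons, ← List.drop_eq_getElem_cons, ← List.drop_eq_getElem_cons,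
      List.take_append_drop]
  have hnW (i : ℕ) (hi : i + 1 ≤ n) : p (i + 1) ≠ W := fun h => by
    have := hinj (i + 1) 0 hi (by omega) (h.trans hp0.symm)
    omega
  have hnc (i : ℕ) (hi : i + 1 < n)
      (h : ¬ IsCollider G.edge (p i) (p (i + 1)) (p (i + 2))) :
      ¬ G.InFamily G.decision (p (i + 1)) := fun hf =>
    hopen i hi (.inl ⟨h, hf, hnW i hi.le⟩)
  have hD (i : ℕ) (hi : i ≤ n) : p i ≠ G.decision := by
    intro hpi
    obtain rfl | hlt := hi.eq_or_lt
    · exact G.decision_not_utility (by rw [← hpi, hpn]; exact hu.1)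
    obtain _ | i := i
    · exact hWD (hp0.symm.trans hpi)
    by_cases hc : IsCollider G.edge (p i) (p (i + 1)) (p (i + 2))
    · have he : G.edge (p (i + 2)) G.decision := hpi ▸ hc.2
      obtain heq | hlt' := Nat.lt_iff_add_one_le.1 hlt |>.eq_or_lt
      · exact G.utility_no_children u hu.1 _ (by rwa [← hpn, ← heq])
      · exact hnc (i + 1) hlt' (fun hc' => CID.asymm hc.2 hc'.1) (.inr he)
    · exact hnc i hlt hc (.inl hpi)
  let idx : V → ℕ := fun v => if h : ∃ i ≤ n, p i = v then h.choose else 0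
  have hidx (i : ℕ) (hi : i ≤ n) : idx (p i) = i := by
    have h : ∃ j ≤ n, p j = p i := ⟨i, hi, rfl⟩
    have : idx (p i) = h.choose := dif_pos h
    rw [this]
    exact hinj _ _ h.choose_spec.1 hi h.choose_spec.2
  refine ⟨{ p := p, n := n, prev := fun v => p (idx v - 1),
            next := fun v => if v = u then u else p (idx v + 1),
            prev_p := fun i hi => by simp only [hidx i hi]
            next_p := fun i hi => ?_
            pos := hn0
            adj := hadj
            observed := hp0 ▸ hW
            influenced := hpn ▸ hu
            ne_decision := hD
            collider := fun i hi hc => ?_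
            not_collider := fun i hi hc hf => hnc i hi hc (.inr hf)
            next_last := by simp [hpn] }, hp0⟩
  · have : p i ≠ u := fun h => by
      have := hinj i n hi.le le_rfl (h.trans hpn.symm)
      omega
    simp only [hidx i hi.le, this, if_false]
  · by_contra hr
    refine hopen i hi (.inr ⟨hc, fun w hw hwZ => hr ?_⟩)
    rcases hwZ.1 with rfl | hwD
    · exact hw
    · exact hw.tail hwD

namespace SignalPath

variable {V : Type} [Fintype V] [DecidableEq V] {G : CID V} (S : SignalPath G)

/-- A value is either absent or a vector of bits indexed by the variables. -/
abbrev Sig (V : Type) : Type := Option (V → ZMod 2)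

/-- The bits of a value. -/
def bits (s : Sig V) : V → ZMod 2 := s.getD 0

/-- The vertex lies on the path. -/
def On (v : V) : Prop := ∃ i ≤ S.n, S.p i = v

/-- No neighbour on the path points to the vertex. -/
def Source (v : V) : Prop := ¬ G.edge (S.prev v) v ∧ ¬ G.edge (S.next v) v

/-- Both neighbours on the path point to the vertex. -/
def Coll (v : V) : Prop := S.On v ∧ G.edge (S.prev v) v ∧ G.edge (S.next v) v

/-- The bits computed at `v` from the values `a` of the other variables and the noise `e`:
the own bit of a path vertex is its noise if it is a source, and the sum of the bits of
its parents on the path otherwise; the bits of colliders and of the decision are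
passed on. -/
noncomputable def vec (v : V) (a : V → Sig V) (e : ZMod 2) : V → ZMod 2 := fun k =>
  if k = v then
    if S.On v then
      if S.Source v then e
      else (if G.edge (S.prev v) v then bits (a (S.prev v)) (S.prev v) else 0) +
        (if G.edge (S.next v) v then bits (a (S.next v)) (S.next v) else 0)
    else 0
  else if (k = G.decision ∨ S.Coll k) ∧ ∃ w, G.edge w v ∧ bits (a w) k = 1 then 1 else 0

theorem vec_congr {v : V} {a a' : V → Sig V} (h : ∀ w, G.edge w v → a w = a' w)
    (e : ZMod 2) : S.vec v a e = S.vec v a' e := by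
  funext k
  unfold vec
  have h₁ : (if G.edge (S.prev v) v then bits (a (S.prev v)) (S.prev v) else 0) =
      if G.edge (S.prev v) v then bits (a' (S.prev v)) (S.prev v) else 0 := by
    split_ifs with hw
    · rw [h _ hw]
    · rfl
  have h₂ : (if G.edge (S.next v) v then bits (a (S.next v)) (S.next v) else 0) =
      if G.edge (S.next v) v then bits (a' (S.next v)) (S.next v) else 0 := by
    split_ifs with hw
    · rw [h _ hw]
    · rfl
  have h₃ : (∃ w, G.edge w v ∧ bits (a w) k = 1) ↔ ∃ w, G.edge w v ∧ bits (a' w) k = 1 :=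
    exists_congr fun w => and_congr_right fun hw => by rw [h w hw]
  simp only [h₁, h₂, h₃]

/-- The real number assigned to a value. -/
noncomputable def level (s : Sig V) : ℝ := ((Fintype.equivFin (Sig V) s : ℕ) : ℝ)

theorem level_injective : Function.Injective (level (V := V)) := fun s t h =>
  (Fintype.equivFin (Sig V)).injective (Fin.ext (by unfold level at h; exact_mod_cast h))

theorem exists_level_lt : ∃ b : Sig V × Sig V, level (V := V) b.1 < level (V := V) b.2 := by
  have hne : level (V := V) none ≠ level (V := V) (some 0) :=
    fun h => Option.some_ne_none _ (level_injective (V := V) h).symm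
  rcases hne.lt_or_gt with h | h
  · exact ⟨(_, _), h⟩
  · exact ⟨(_, _), h⟩

/-- The value of a lost utility node. -/
noncomputable def bad : Sig V := (exists_level_lt (V := V)).choose.1

/-- The value of a won utility node. -/
noncomputable def good : Sig V := (exists_level_lt (V := V)).choose.2

theorem level_bad_lt : level (V := V) bad < level (V := V) good :=
  (exists_level_lt (V := V)).choose_spec

/-- The value computed at `v`: the end of the path compares its bit with that of the
decision, and other vertices compute their bits unless a parent is absent. -/
noncomputable def out (v : V) (a : V → Sig V) (e : ZMod 2) : Sig V :=
  if v ∈ G.utility then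
    if v = S.p S.n ∧ S.vec v a e v = S.vec v a e G.decision then good else bad
  else if ∃ w, G.edge w v ∧ w ≠ G.decision ∧ a w = none then none
  else some (S.vec v a e)

theorem out_congr {v : V} {a a' : V → Sig V} (h : ∀ w, G.edge w v → a w = a' w)
    (e : ZMod 2) : S.out v a e = S.out v a' e := by
  unfold out
  have : (∃ w, G.edge w v ∧ w ≠ G.decision ∧ a w = none) ↔
      ∃ w, G.edge w v ∧ w ≠ G.decision ∧ a' w = none :=
    exists_congr fun w => and_congr_right fun hw => by rw [h w hw]
  simp only [S.vec_congr h, this]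

/-- The model in which the decision has to guess the bit at the end of the path. -/
noncomputable def model : SCIM V where
  toCID := G
  dom _ := Sig V
  dom_fintype _ := inferInstance
  dom_nonempty _ := inferInstance
  edom _ := ZMod 2
  edom_fintype _ := inferInstance
  edom_nonempty _ := inferInstance
  utilVal _ := level
  utilVal_inj _ _ := level_injective
  f v _ pa e := S.out v (fun w => if h : G.edge w v then pa w h else none) e
  μ _ _ := 1 / 2
  μ_nonneg _ _ := by norm_num
  μ_sum _ := by
    rw [Finset.sum_const, Finset.card_univ]
    have : @Fintype.card (ZMod 2) inferInstance = 2 := ZMod.card 2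
    simp

/-- Values of the variables of the model as a non-dependent function. -/
noncomputable def value (π : S.model.Policy) (ε : V → ZMod 2) : V → Sig V :=
  S.model.val π ε

theorem value_eq (π : S.model.Policy) (ε : V → ZMod 2) {v : V} (hv : v ≠ G.decision) :
    S.value π ε v = S.out v (S.value π ε) (ε v) := by
  refine (S.model.val_eq_of_ne π ε hv).trans (S.out_congr (fun w hw => ?_) (ε v))
  exact dif_pos hw

/-- Values of the variables when `X` is made absent. -/
noncomputable def valueDo (π : S.model.Policy) (X : V) (ε : V → ZMod 2) : V → Sig V :=
  S.model.valDo π (S.model.single X (none : Sig V)) ε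

theorem valueDo_self (π : S.model.Policy) (X : V) (ε : V → ZMod 2) :
    S.valueDo π X ε X = none :=
  S.model.valDo_self π X _ ε

theorem valueDo_eq (π : S.model.Policy) {X : V} (ε : V → ZMod 2) {v : V}
    (hv : v ≠ G.decision) (hX : v ≠ X) :
    S.valueDo π X ε v = S.out v (S.valueDo π X ε) (ε v) := by
  refine (S.model.valDo_eq_of_ne π _ ε hv hX).trans (S.out_congr (fun w hw => ?_) (ε v))
  exact dif_pos hw

variable {S}

theorem on_p {i : ℕ} (h : i ≤ S.n) : S.On (S.p i) := ⟨i, h, rfl⟩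

theorem On.prev {v : V} (h : S.On v) : S.On (S.prev v) := by
  obtain ⟨i, hi, rfl⟩ := h
  rw [S.prev_p i hi]
  exact on_p (by omega)

theorem On.next {v : V} (h : S.On v) : S.On (S.next v) := by
  obtain ⟨i, hi, rfl⟩ := h
  rcases hi.eq_or_lt with rfl | hi
  · rw [S.next_last]
    exact on_p le_rfl
  · rw [S.next_p i hi]
    exact on_p hi

theorem On.ne_decision {v : V} (h : S.On v) : v ≠ G.decision := by
  obtain ⟨i, hi, rfl⟩ := h
  exact S.ne_decision i hi

variable (S)

/-- The own bit of a path vertex as a function of the noise. -/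
noncomputable def bit (ε : V → ZMod 2) : V → ZMod 2 :=
  S.model.edge_wf.fix (C := fun _ => ZMod 2) fun v IH =>
    if S.Source v then ε v
    else (if h : G.edge (S.prev v) v then IH _ h else 0) +
      (if h : G.edge (S.next v) v then IH _ h else 0)

theorem bit_eq (ε : V → ZMod 2) (v : V) :
    S.bit ε v = if S.Source v then ε v
      else (if G.edge (S.prev v) v then S.bit ε (S.prev v) else 0) +
        (if G.edge (S.next v) v then S.bit ε (S.next v) else 0) := by
  unfold bit
  rw [WellFounded.fix_eq]
  simp only [dite_eq_ite]

theorem value_ne_none (π : S.model.Policy) (ε : V → ZMod 2) (v : V) (hv : v ≠ G.decision)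
    (hu : v ∉ G.utility) : S.value π ε v ≠ none := by
  induction v using S.model.edge_wf.induction with
  | _ v ih =>
    rw [S.value_eq π ε hv, out, if_neg hu, if_neg]
    · simp
    · rintro ⟨w, hw, hwD, h⟩
      exact ih w hw hwD (G.not_mem_utility hw) h

theorem value_eq_some (π : S.model.Policy) (ε : V → ZMod 2) {v : V} (hv : v ≠ G.decision)
    (hu : v ∉ G.utility) :
    S.value π ε v = some (S.vec v (S.value π ε) (ε v)) := by
  rw [S.value_eq π ε hv, out, if_neg hu, if_neg]
  rintro ⟨w, hw, hwD, h⟩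
  exact S.value_ne_none π ε w hwD (G.not_mem_utility hw) h

theorem bits_value (π : S.model.Policy) (ε : V → ZMod 2) {v : V} (hv : v ≠ G.decision)
    (hu : v ∉ G.utility) :
    bits (S.value π ε v) = S.vec v (S.value π ε) (ε v) := by
  rw [S.value_eq_some π ε hv hu]
  rfl

theorem vec_self (π : S.model.Policy) (ε : V → ZMod 2) (v : V) :
    S.vec v (S.value π ε) (ε v) v = if S.On v then S.bit ε v else 0 := by
  induction v using S.model.edge_wf.induction with
  | _ v ih =>
    unfold vec
    rw [if_pos rfl]
    by_cases hv : S.On v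
    · have hparent (w : V) (hw : S.On w) (hwv : G.edge w v) :
          bits (S.value π ε w) w = S.bit ε w := by
        rw [S.bits_value π ε hw.ne_decision (G.not_mem_utility hwv), ih w hwv, if_pos hw]
      have h₁ : (if G.edge (S.prev v) v then bits (S.value π ε (S.prev v)) (S.prev v) else 0) =
          if G.edge (S.prev v) v then S.bit ε (S.prev v) else 0 := by
        split_ifs with hw
        · rw [hparent _ hv.prev hw]
        · rfl
      have h₂ : (if G.edge (S.next v) v then bits (S.value π ε (S.next v)) (S.next v) else 0) =
          if G.edge (S.next v) v then S.bit ε (S.next v) else 0 := by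
        split_ifs with hw
        · rw [hparent _ hv.next hw]
        · rfl
      rw [if_pos hv, if_pos hv, S.bit_eq, h₁, h₂]
    · rw [if_neg hv, if_neg hv]

theorem bits_value_self (π : S.model.Policy) (ε : V → ZMod 2) {v : V} (hv : S.On v)
    (hu : v ∉ G.utility) : bits (S.value π ε v) v = S.bit ε v := by
  rw [S.bits_value π ε hv.ne_decision hu, S.vec_self, if_pos hv]

/-- Colliders and the decision pass on their bits to their descendants. -/
theorem vec_passed (π : S.model.Policy) (ε : V → ZMod 2) {k : V}
    (hk : k = G.decision ∨ S.Coll k) (v : V) (hvk : v ≠ k)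
    (h : k = G.decision ∨ ¬ Relation.ReflTransGen G.edge G.decision v) :
    S.vec v (S.value π ε) (ε v) k =
      if Relation.ReflTransGen G.edge k v then bits (S.value π ε k) k else 0 := by
  induction v using S.model.edge_wf.induction with
  | _ v ih =>
    have hparent (w : V) (hw : G.edge w v) : bits (S.value π ε w) k =
        if Relation.ReflTransGen G.edge k w then bits (S.value π ε k) k else 0 := by
      by_cases hwk : w = k
      · rw [hwk, if_pos .refl]
      · have hwD : w ≠ G.decision := by
          rintro rfl
          rcases h with h | h
          · exact hwk h.symm
          · exact h (.single hw)
        rw [S.bits_value π ε hwD (G.not_mem_utility hw)]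
        exact ih w hw hwk (h.imp_right fun h h' => h (h'.tail hw))
    unfold vec
    rw [if_neg hvk.symm]
    have h01 : ∀ b : ZMod 2, (if b = 1 then (1 : ZMod 2) else 0) = b := by decide
    by_cases hkv : Relation.ReflTransGen G.edge k v
    · have : ((k = G.decision ∨ S.Coll k) ∧
          ∃ w, G.edge w v ∧ bits (S.value π ε w) k = 1) ↔ bits (S.value π ε k) k = 1 := by
        constructor
        · rintro ⟨-, w, hw, h1⟩
          rw [hparent w hw] at h1
          split_ifs at h1 with h2
          · exact h1
          · exact absurd h1 (by decide)
        · intro h1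
          obtain h2 | ⟨w, hkw, hw⟩ := hkv.cases_tail
          · exact absurd h2 hvk
          · exact ⟨hk, w, hw, by rw [hparent w hw, if_pos hkw, h1]⟩
      rw [if_pos hkv, ← h01 (bits (S.value π ε k) k)]
      simp only [this]
    · rw [if_neg hkv, if_neg]
      rintro ⟨-, w, hw, h1⟩
      rw [hparent w hw, if_neg fun h => hkv (h.tail hw)] at h1
      exact absurd h1 (by decide)

theorem not_mem_utility_of_edge_ne {v w : V} (h : Relation.ReflTransGen G.edge v w)
    (hne : v ≠ w) : v ∉ G.utility := by
  obtain h | ⟨x, hx, -⟩ := h.cases_head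
  · exact absurd h hne
  · exact G.not_mem_utility hx

variable {S} in
/-- The bits of observed path vertices and of colliders above the decision are determined
by the decision context. -/
theorem bit_congr_of_observed {π : S.model.Policy} {ε ε' : V → ZMod 2}
    (h : ∀ w, G.edge w G.decision → S.value π ε w = S.value π ε' w) {k : V} (hk : S.On k)
    (hkD : G.edge k G.decision ∨
      S.Coll k ∧ Relation.ReflTransGen G.edge k G.decision) : S.bit ε k = S.bit ε' k := by
  by_cases he : G.edge k G.decision
  · rw [← S.bits_value_self π ε hk (G.not_mem_utility he),
      ← S.bits_value_self π ε' hk (G.not_mem_utility he), h k he]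
  obtain ⟨hc, hkD⟩ := hkD.resolve_left he
  have hu := not_mem_utility_of_edge_ne hkD hk.ne_decision
  obtain h' | ⟨w, hkw, hw⟩ := hkD.cases_tail
  · exact absurd h'.symm hk.ne_decision
  have hwk : w ≠ k := by rintro rfl; exact he hw
  have key (ε : V → ZMod 2) : bits (S.value π ε w) k = S.bit ε k := by
    rw [S.bits_value π ε (G.ne_decision_of_edge hw) (G.not_mem_utility hw),
      S.vec_passed π ε (.inr hc) w hwk (.inr (G.not_decision_ancestor hw)), if_pos hkw,
      S.bits_value_self π ε hk hu]
  rw [← key, ← key, h w hw]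

theorem edge_last : G.edge (S.p (S.n - 1)) (S.p S.n) := by
  have h := S.adj (S.n - 1) (by have := S.pos; omega)
  rw [Nat.sub_add_cancel S.pos] at h
  exact h.resolve_right fun h => G.not_mem_utility h S.influenced.1

/-- The bit at the end of the path is determined by the decision context. -/
theorem bit_last_congr {π : S.model.Policy} {ε ε' : V → ZMod 2}
    (h : ∀ w, G.edge w G.decision → S.value π ε w = S.value π ε' w) :
    S.bit ε (S.p S.n) = S.bit ε' (S.p S.n) := by
  let t (ε : V → ZMod 2) (i : ℕ) : ZMod 2 :=
    if G.edge (S.p i) (S.p (i + 1)) then S.bit ε (S.p i) else S.bit ε (S.p (i + 1))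
  have ht (i : ℕ) (hi : i < S.n) : t ε i = t ε' i := by
    induction i with
    | zero =>
      have h0 : S.bit ε (S.p 0) = S.bit ε' (S.p 0) :=
        bit_congr_of_observed h (on_p (Nat.zero_le _)) (.inl S.observed)
      by_cases hA : G.edge (S.p 0) (S.p 1)
      · simpa only [t, zero_add, if_pos hA] using h0
      · have hA' : G.edge (S.p 1) (S.p 0) := (S.adj 0 hi).resolve_left hA
        have key (ε : V → ZMod 2) : S.bit ε (S.p 0) = S.bit ε (S.p 1) := by
          have hs : ¬ S.Source (S.p 0) := fun hs => hs.2 (by rwa [S.next_p 0 hi])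
          rw [S.bit_eq, if_neg hs, S.prev_p 0 (Nat.zero_le _), S.next_p 0 hi,
            if_neg (G.not_edge_self _), if_pos hA', zero_add]
        simpa only [t, zero_add, if_neg hA, ← key] using h0
    | succ i ih =>
      have hprev : S.prev (S.p (i + 1)) = S.p i := S.prev_p (i + 1) hi.le
      have hnext : S.next (S.p (i + 1)) = S.p (i + 2) := S.next_p (i + 1) hi
      specialize ih (by omega)
      have key (ε : V → ZMod 2) := S.bit_eq ε (S.p (i + 1))
      simp only [Source, hprev, hnext] at key
      by_cases hA : G.edge (S.p i) (S.p (i + 1)) <;>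
        by_cases hB : G.edge (S.p (i + 1)) (S.p (i + 2))
      · have hB' := CID.asymm hB
        simp only [hA, hB', not_true, false_and, if_false, if_true, add_zero] at key
        simpa only [t, if_pos hA, if_pos hB, key] using ih
      · have hB' : G.edge (S.p (i + 2)) (S.p (i + 1)) := (S.adj (i + 1) hi).resolve_left hB
        simp only [hA, hB', not_true, false_and, if_false, if_true] at key
        have hc : S.bit ε (S.p (i + 1)) = S.bit ε' (S.p (i + 1)) := by
          refine bit_congr_of_observed h (on_p hi.le) (.inr ⟨⟨on_p hi.le, ?_, ?_⟩,
            S.collider i hi ⟨hA, hB'⟩⟩)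
          · rwa [hprev]
          · rwa [hnext]
        simp only [t, if_pos hA] at ih
        rw [key, key, ih] at hc
        simpa only [t, if_neg hB] using add_left_cancel hc
      · simpa only [t, if_neg hA, if_pos hB] using ih
      · have hB' : G.edge (S.p (i + 2)) (S.p (i + 1)) := (S.adj (i + 1) hi).resolve_left hB
        simp only [hA, hB', not_true, and_false, if_false, if_true, zero_add] at key
        simpa only [t, if_neg hA, if_neg hB, key] using ih
  have hpos := S.pos
  have hlast := S.edge_last
  have key (ε : V → ZMod 2) : S.bit ε (S.p S.n) = S.bit ε (S.p (S.n - 1)) := by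
    rw [S.bit_eq, S.prev_p _ le_rfl, S.next_last, if_pos hlast, if_neg (G.not_edge_self _),
      add_zero, if_neg]
    rintro ⟨hs, -⟩
    rw [S.prev_p _ le_rfl] at hs
    exact hs hlast
  have := ht (S.n - 1) (by omega)
  simp only [t, Nat.sub_add_cancel hpos, if_pos hlast] at this
  rw [key, key, this]

theorem value_congr_policy (π π' : S.model.Policy) (ε : V → ZMod 2) {w : V}
    (hw : G.edge w G.decision) : S.value π ε w = S.value π' ε w :=
  S.model.val_congr_policy π π' ε (G.not_decision_ancestor hw)

/-- Some policy always guesses the bit at the end of the path. -/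
theorem exists_policy_guess :
    ∃ π : S.model.Policy, ∀ ε, bits (S.value π ε G.decision) G.decision = S.bit ε (S.p S.n) := by
  let π₀ : S.model.Policy := fun _ _ => (none : Sig V)
  let π : S.model.Policy := fun pa _ => (some fun _ =>
    if h : ∃ ε, ∀ w hw, S.value π₀ ε w = pa w hw then S.bit h.choose (S.p S.n) else 0 : Sig V)
  refine ⟨π, fun ε => ?_⟩
  have hD : S.value π ε G.decision = π (S.model.ctx π ε) (ε G.decision) :=
    S.model.val_decision π ε
  have h : ∃ ε', ∀ w (hw : G.edge w G.decision), S.value π₀ ε' w = S.model.ctx π ε w hw :=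
    ⟨ε, fun w hw => S.value_congr_policy π₀ π ε hw⟩
  have hb : bits (S.value π ε G.decision) G.decision = S.bit h.choose (S.p S.n) := by
    rw [hD]
    exact dif_pos h
  rw [hb]
  refine S.bit_last_congr (π := π₀) fun w hw => ?_
  rw [h.choose_spec w hw]
  exact S.value_congr_policy π π₀ ε hw

theorem value_utility (π : S.model.Policy) (ε : V → ZMod 2) {v : V} (hv : v ∈ G.utility) :
    S.value π ε v = if v = S.p S.n ∧
      S.bit ε (S.p S.n) = bits (S.value π ε G.decision) G.decision then good else bad := by
  have hvD : v ≠ G.decision := by rintro rfl; exact G.decision_not_utility hv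
  rw [S.value_eq π ε hvD, out, if_pos hv]
  refine if_congr (and_congr_right ?_) rfl rfl
  rintro rfl
  rw [S.vec_self, if_pos (on_p le_rfl),
    S.vec_passed π ε (.inl rfl) _ hvD (.inl rfl), if_pos S.influenced.2]

theorem optimal_guess {π : S.model.Policy} (hπ : S.model.Optimal π) (ε : V → ZMod 2) :
    bits (S.value π ε G.decision) G.decision = S.bit ε (S.p S.n) := by
  obtain ⟨π₀, hπ₀⟩ := S.exists_policy_guess
  by_contra hne
  refine (hπ π₀).not_gt ?_
  have hle (ε : V → ZMod 2) (v : V) (hv : v ∈ G.utility) :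
      level (S.value π ε v) ≤ level (S.value π₀ ε v) := by
    rw [S.value_utility π ε hv, S.value_utility π₀ ε hv, hπ₀]
    split_ifs <;> simp_all [level_bad_lt.le]
  have hprob (ε : V → ZMod 2) : 0 < S.model.prob ε :=
    Finset.prod_pos fun v _ => by change (0 : ℝ) < 1 / 2; norm_num
  refine Finset.sum_lt_sum (fun ε _ => ?_) ⟨ε, Finset.mem_univ _, ?_⟩
  · exact mul_le_mul_of_nonneg_left (Finset.sum_le_sum (hle ε)) (hprob ε).le
  · refine mul_lt_mul_of_pos_left (Finset.sum_lt_sum (hle ε) ⟨S.p S.n, S.influenced.1, ?_⟩)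
      (hprob ε)
    change level (S.value π ε (S.p S.n)) < level (S.value π₀ ε (S.p S.n))
    rw [S.value_utility π ε S.influenced.1, S.value_utility π₀ ε S.influenced.1, hπ₀,
      if_neg fun h => hne h.2.symm, if_pos ⟨rfl, rfl⟩]
    exact level_bad_lt

theorem valueDo_eq_none (π : S.model.Policy) {X : V} (ε : V → ZMod 2) {v : V}
    (h : Relation.ReflTransGen G.edge X v) (hu : v ∉ G.utility)
    (hD : ¬ Relation.ReflTransGen G.edge G.decision v) : S.valueDo π X ε v = none := by
  induction h with
  | refl => exact S.valueDo_self π X ε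
  | @tail b c hb hbc ih =>
    by_cases hc : c = X
    · rw [hc]
      exact S.valueDo_self π X ε
    have hcD : c ≠ G.decision := by rintro rfl; exact hD .refl
    rw [S.valueDo_eq π ε hcD hc, out, if_neg hu, if_pos]
    refine ⟨b, hbc, ?_, ih (G.not_mem_utility hbc) fun h => hD (h.tail hbc)⟩
    rintro rfl
    exact hD (.single hbc)

theorem bit_zero (v : V) : S.bit 0 v = 0 := by
  induction v using S.model.edge_wf.induction with
  | _ v ih =>
    rw [S.bit_eq]
    split_ifs with _ h₁ h₂ h₂
    · rfl
    · rw [ih _ h₁, ih _ h₂, add_zero]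
    · rw [ih _ h₁, add_zero]
    · rw [ih _ h₂, add_zero]
    · exact add_zero _

variable {S}

theorem On.not_coll_prev {v : V} (hv : S.On v) (h : G.edge (S.prev v) v) :
    ¬ S.Coll (S.prev v) := by
  obtain ⟨i, hi, rfl⟩ := hv
  rw [S.prev_p i hi] at h ⊢
  obtain _ | i := i
  · exact absurd h (G.not_edge_self _)
  · rintro ⟨-, -, hc⟩
    rw [Nat.add_sub_cancel] at hc h
    rw [S.next_p i hi] at hc
    exact CID.asymm h hc

theorem On.not_coll_next {v : V} (hv : S.On v) (h : G.edge (S.next v) v) :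
    ¬ S.Coll (S.next v) := by
  obtain ⟨i, hi, rfl⟩ := hv
  rcases hi.eq_or_lt with rfl | hi
  · rw [S.next_last] at h
    exact absurd h (G.not_edge_self _)
  · rw [S.next_p i hi] at h ⊢
    rintro ⟨-, hc, -⟩
    rw [S.prev_p (i + 1) hi] at hc
    exact CID.asymm h hc

/-- If all sources on the path emit `1`, then all path vertices have bit `1`, except
the colliders, which have bit `0`. -/
theorem bit_of_forall_on {ε : V → ZMod 2} (hε : ∀ v, S.On v → ε v = 1) (v : V)
    (hv : S.On v) : S.bit ε v = if S.Coll v then 0 else 1 := by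
  induction v using S.model.edge_wf.induction with
  | _ v ih =>
    have hp (h : G.edge (S.prev v) v) : S.bit ε (S.prev v) = 1 := by
      rw [ih _ h hv.prev, if_neg (hv.not_coll_prev h)]
    have hn (h : G.edge (S.next v) v) : S.bit ε (S.next v) = 1 := by
      rw [ih _ h hv.next, if_neg (hv.not_coll_next h)]
    rw [S.bit_eq]
    by_cases h₁ : G.edge (S.prev v) v <;> by_cases h₂ : G.edge (S.next v) v
    · rw [if_neg fun h => h.1 h₁, if_pos h₁, if_pos h₂, if_pos ⟨hv, h₁, h₂⟩, hp h₁, hn h₂]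
      rfl
    · rw [if_neg fun h => h.1 h₁, if_pos h₁, if_neg h₂, if_neg fun h => h₂ h.2.2, hp h₁,
        add_zero]
    · rw [if_neg fun h => h.2 h₂, if_neg h₁, if_pos h₂, if_neg fun h => h₁ h.2.1, hn h₂,
        zero_add]
    · rw [if_pos ⟨h₁, h₂⟩, if_neg fun h => h₁ h.2.1, hε v hv]

/-- If all colliders have bit `0`, then all observations except the start of the path
are trivial. -/
theorem value_eq_some_zero (π : S.model.Policy) {ε : V → ZMod 2}
    (hε : ∀ v, S.Coll v → S.bit ε v = 0) {w : V} (hw : G.edge w G.decision)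
    (hw0 : w ≠ S.p 0) : S.value π ε w = some 0 := by
  have hwD := G.ne_decision_of_edge hw
  have hwu := G.not_mem_utility hw
  have hDw := G.not_decision_ancestor hw
  rw [S.value_eq_some π ε hwD hwu]
  congr 1
  funext k
  rw [Pi.zero_apply]
  by_cases hkw : k = w
  · subst hkw
    rw [S.vec_self]
    split_ifs with hk
    · refine hε k ⟨hk, ?_⟩
      obtain ⟨i, hi, rfl⟩ := hk
      obtain _ | i := i
      · exact absurd rfl hw0
      obtain heq | hlt := hi.eq_or_lt
      · rw [heq] at hwu
        exact absurd S.influenced.1 hwu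
      · rw [S.prev_p _ hi, S.next_p _ hlt]
        exact not_not.1 fun hc => S.not_collider i hlt hc hw
    · rfl
  by_cases hk : k = G.decision ∨ S.Coll k
  · rw [S.vec_passed π ε hk w (Ne.symm hkw) (.inr hDw)]
    split_ifs with hr
    · rcases hk with rfl | hk
      · exact absurd hr hDw
      · rw [S.bits_value_self π ε hk.1 (not_mem_utility_of_edge_ne hr hkw), hε k hk]
    · rfl
  · unfold vec
    rw [if_neg hkw, if_neg fun h => hk h.1]

variable (S)

theorem responseIncentive {X : V} (hX : X ≠ G.decision)
    (hr : Relation.ReflTransGen G.edge X (S.p 0)) : S.model.ResponseIncentive X := by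
  intro π hπ
  by_contra! hno
  let ε : V → ZMod 2 := fun v => if v = G.decision then 0 else 1
  have hone : ∀ v, S.On v → S.bit ε v = if S.Coll v then 0 else 1 :=
    bit_of_forall_on fun v hv => if_neg hv.ne_decision
  have hctx (w : V) (hw : G.edge w G.decision) : S.valueDo π X 0 w = S.valueDo π X ε w := by
    by_cases hXw : Relation.ReflTransGen G.edge X w
    · rw [S.valueDo_eq_none π 0 hXw (G.not_mem_utility hw) (G.not_decision_ancestor hw),
        S.valueDo_eq_none π ε hXw (G.not_mem_utility hw) (G.not_decision_ancestor hw)]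
    · have hval (ε : V → ZMod 2) : S.valueDo π X ε w = S.value π ε w :=
        S.model.valDo_of_not_descendant π _ ε hXw
      have hw0 : w ≠ S.p 0 := by rintro rfl; exact hXw hr
      rw [hval, hval, value_eq_some_zero π (fun v _ => S.bit_zero v) hw hw0,
        value_eq_some_zero π (fun v hv => by rw [hone v hv.1, if_pos hv]) hw hw0]
  have hdo (ε : V → ZMod 2) : S.valueDo π X ε G.decision =
      π (fun w _ => S.valueDo π X ε w) (ε G.decision) :=
    S.model.valDo_decision π hX _ ε
  have hval (ε : V → ZMod 2) : S.valueDo π X ε G.decision = S.value π ε G.decision :=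
    hno _ ε
  have heq : S.value π 0 G.decision = S.value π ε G.decision := by
    rw [← hval, ← hval, hdo, hdo]
    congr 1
    · funext w hw
      exact hctx w hw
    · exact (if_pos rfl).symm
  have h := S.optimal_guess hπ 0
  rw [heq, S.optimal_guess hπ ε, S.bit_zero, hone _ (on_p le_rfl), if_neg] at h
  · exact absurd h (by decide)
  · rintro ⟨-, -, hc⟩
    rw [S.next_last] at hc
    exact G.not_edge_self _ hc

end SignalPath

/-- **Response incentive graphical criterion** (Theorem: soundness and completeness).
A single-decision CID `G` is compatible with a response incentive on a variable `X ≠ D`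
iff there are a parent `W` of `D` and a utility node `U` with a directed path `X ⇝ W`,
a directed path `D ⇝ U`, and `W` d-connected to `U` given `({D} ∪ Pa_D) \ {W}`. -/
theorem response_incentive_graphical_criterion
    {V : Type} [Fintype V] [DecidableEq V] (G : CID V) (X : V) (hX : X ≠ G.decision) :
    (∃ M : SCIM V, M.toCID = G ∧ M.ResponseIncentive X) ↔ RICriterion G X := by
  constructor
  · rintro ⟨M, rfl, h⟩
    exact h.riCriterion M hX
  · rintro ⟨W, hW, u, hu, hXW, hDu, hsep⟩
    obtain ⟨S, rfl⟩ := exists_signalPath G hW ⟨hu, hDu⟩ hsep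
    exact ⟨S.model, rfl, S.responseIncentive hX hXW⟩
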